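/- For every A > 0 and every ε > 0 there exists an integer N such that for all integers n ≥ N and all integers m with 1 ≤ m ≤ min{n, A·log n}, writing u = n/m and t = (log n)/m, one has | (1/u)·log( p_{n,m}/ρ(u) ) − log( t/(1 − e^{−t}) ) | ≤ ε. -/

import Mathlib

open Real

noncomputable section

/-- Predicate characterizing the Dickman function `ρ : [0,∞) → (0,∞)`:
continuous on `[0,∞)`, positive, equal to `1` on `[0,1]`, and satisfying the
delay differential equation `t·ρ'(t) + ρ(t-1) = 0` for `t > 1`. -/
def IsDickman (ρ : ℝ → ℝ) : Prop :=
  ContinuousOn ρ (Set.Ici 0) ∧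
  (∀ t : ℝ, 0 ≤ t → 0 < ρ t) ∧
  (∀ t ∈ Set.Icc (0:ℝ) 1, ρ t = 1) ∧
  (∀ t : ℝ, 1 < t → HasDerivAt ρ (-(ρ (t - 1)) / t) t)

/-- `ξ(u)`: for `u > 1`, the unique positive solution of `e^ξ = 1 + u·ξ`; otherwise `0`. -/
def xi (u : ℝ) : ℝ :=
  open Classical in
  if h : ∃ x : ℝ, 0 < x ∧ Real.exp x = 1 + u * x then h.choose else 0

/-- `p_{n,m}`: probability that a uniformly random permutation of `{1,…,n}` is `m`-friable,
i.e. has no cycle of length greater than `m`. -/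
def permProb (n m : ℕ) : ℝ :=
  (Nat.card {σ : Equiv.Perm (Fin n) // ∀ c ∈ σ.cycleType, c ≤ m} : ℝ) /
    (Nat.factorial n : ℝ)

/-- `p_{n,m,q}`: proportion of monic polynomials of degree `n` over a finite field `F`
(of cardinality `q`) that are `m`-friable, i.e. all of whose monic irreducible factors
have degree at most `m`. -/
def polyProb (F : Type) [Field F] [Fintype F] (n m : ℕ) : ℝ :=
  (Nat.card {f : Polynomial F // f.Monic ∧ f.natDegree = n ∧
      ∀ p : Polynomial F, p.Monic → Irreducible p → p ∣ f → p.natDegree ≤ m} : ℝ) /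
    (Fintype.card F : ℝ) ^ n

/-- `F_q(z) = ∏_{deg P ≤ m} (1 - (z/q)^{deg P})⁻¹`, the product over monic irreducible
polynomials `P` over `F` of degree at most `m`. -/
def FqFun (F : Type) [Field F] [Fintype F] (m : ℕ) (z : ℝ) : ℝ :=
  ∏ᶠ p ∈ {p : Polynomial F | p.Monic ∧ Irreducible p ∧ p.natDegree ≤ m},
    (1 - (z / (Fintype.card F : ℝ)) ^ p.natDegree)⁻¹

/-- `G_q(z) = F_q(z) · exp(-∑_{i=1}^m z^i/i)`. -/
def Gq (F : Type) [Field F] [Fintype F] (m : ℕ) (z : ℝ) : ℝ :=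
  FqFun F m z * Real.exp (-(∑ i ∈ Finset.Icc 1 m, z ^ i / (i : ℝ)))

/-- The coefficients `d_{m,i}`. -/
def dcoef (m i : ℕ) : ℝ :=
  if i = m then -(1 / (m : ℝ)) * ∑ j ∈ Finset.Icc 2 m, (1 : ℝ) / (j : ℝ)
  else Real.Gamma ((i : ℝ) + (i : ℝ) / (m : ℝ)) /
    (((m : ℝ) - (i : ℝ)) * (Nat.factorial i : ℝ) * Real.Gamma (1 + (i : ℝ) / (m : ℝ)))

/-- `T(s) = ∫₀^s ((e^t - 1)/t)·((t/m)/(1 - e^{-t/m}) - 1) dt`, integrand extended by `0` at `t = 0`. -/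
def Tfun (m : ℕ) (s : ℝ) : ℝ :=
  ∫ t in (0:ℝ)..s,
    if t = 0 then 0 else
      ((Real.exp t - 1) / t) * ((t / (m : ℝ)) / (1 - Real.exp (-t / (m : ℝ))) - 1)

end

section PermRec

open Finset

noncomputable def zz (s : Multiset ℕ) : ℝ :=
  (s.prod : ℝ) * ∏ i ∈ s.toFinset, ((Nat.factorial (s.count i) : ℕ) : ℝ)

lemma zz_super (s : Multiset ℕ) (T : Finset ℕ) (h : s.toFinset ⊆ T) :
    zz s = (s.prod : ℝ) * ∏ i ∈ T, ((Nat.factorial (s.count i) : ℕ) : ℝ) := by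
  unfold zz
  congr 1
  apply Finset.prod_subset h
  intro x _ hx
  rw [Multiset.mem_toFinset] at hx
  simp [Multiset.count_eq_zero_of_notMem hx]

lemma zz_cons (s : Multiset ℕ) (i : ℕ) :
    zz (i ::ₘ s) = (i : ℝ) * (s.count i + 1 : ℝ) * zz s := by
  have hi : i ∈ (i ::ₘ s).toFinset := by simp
  rw [zz_super s (i ::ₘ s).toFinset (by intro x; simp; tauto), zz,
    ← Finset.mul_prod_erase _ _ hi, ← Finset.mul_prod_erase _ _ hi]
  have : ∀ x ∈ (i ::ₘ s).toFinset.erase i,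
      ((Nat.factorial ((i ::ₘ s).count x) : ℕ) : ℝ) = ((Nat.factorial (s.count x) : ℕ) : ℝ) := by
    intro x hx
    rw [Multiset.count_cons_of_ne (Finset.ne_of_mem_erase hx)]
  rw [Finset.prod_congr rfl this, Multiset.count_cons_self, Nat.factorial_succ]
  simp only [Multiset.prod_cons]
  push_cast
  ring

lemma zz_pos (s : Multiset ℕ) (h : ∀ i ∈ s, 0 < i) : 0 < zz s := by
  unfold zz
  have : 0 < s.prod := Multiset.prod_pos h
  positivity

lemma zz_ones (s : Multiset ℕ) (h : 1 ∉ s) (k : ℕ) :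
    zz (s + Multiset.replicate k 1) = (Nat.factorial k : ℝ) * zz s := by
  induction k with
  | zero => simp
  | succ k ih =>
    rw [Multiset.replicate_succ, Multiset.add_cons, zz_cons, ih, Multiset.count_add,
      Multiset.count_eq_zero_of_notMem h, Nat.factorial_succ]
    simp
    ring

noncomputable def QQ (m n : ℕ) : ℝ :=
  ∑ l ∈ (Finset.univ : Finset n.Partition).filter (fun l => ∀ i ∈ l.parts, i ≤ m), 1 / zz l.parts

lemma fiber_eq {α : Type} [Fintype α] [DecidableEq α] (l : (Fintype.card α).Partition) :
    ((Finset.univ.filter (fun σ : Equiv.Perm α => σ.partition = l)).card : ℝ) =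
      (Nat.factorial (Fintype.card α) : ℝ) * (1 / zz l.parts) := by
  set μ := l.parts.filter (fun n => 2 ≤ n) with hμ
  have hl : l.parts = μ + Multiset.replicate (Fintype.card α - μ.sum) 1 := by
    have h1 : l.parts = μ + l.parts.filter (fun n => ¬ 2 ≤ n) := by
      rw [hμ, Multiset.filter_add_not]
    have h2 : l.parts.filter (fun n => ¬ 2 ≤ n) =
        Multiset.replicate (Multiset.card (l.parts.filter (fun n => ¬ 2 ≤ n))) 1 := by
      rw [Multiset.eq_replicate]
      refine ⟨rfl, fun b hb => ?_⟩
      rw [Multiset.mem_filter] at hb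
      have := l.parts_pos hb.1
      omega
    have h3 := l.parts_sum
    rw [h1, h2] at h3
    simp only [Multiset.sum_add, Multiset.sum_replicate, smul_eq_mul, mul_one] at h3
    rw [h2] at h1
    rw [h1]
    congr 2
    omega
  have h1μ : 1 ∉ μ := by simp [hμ]
  have hsum : μ.sum ≤ Fintype.card α := by
    have h3 := l.parts_sum
    rw [hl, Multiset.sum_add] at h3
    omega
  have hset : Finset.univ.filter (fun σ : Equiv.Perm α => σ.partition = l) =
      Finset.univ.filter (fun σ : Equiv.Perm α => σ.cycleType = μ) := by
    ext σ
    simp only [Finset.mem_filter, Finset.mem_univ, true_and]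
    constructor
    · rintro rfl
      rw [hμ, Equiv.Perm.filter_parts_partition_eq_cycleType]
    · intro h
      apply Nat.Partition.ext
      rw [Equiv.Perm.parts_partition, hl, h, ← Equiv.Perm.sum_cycleType, h]
  have key := Equiv.Perm.card_of_cycleType_mul_eq α μ
  rw [if_pos ⟨hsum, by intro a ha; rw [hμ, Multiset.mem_filter] at ha; exact ha.2⟩] at key
  have hz : zz l.parts = (Nat.factorial (Fintype.card α - μ.sum) : ℝ) * zz μ := by
    conv_lhs => rw [hl]
    exact zz_ones μ h1μ _
  have hzp := zz_pos l.parts (fun i hi => l.parts_pos hi)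
  rw [hset, mul_one_div, eq_div_iff hzp.ne', hz, ← key, zz]
  push_cast
  ring

lemma QQ_perm {α : Type} [Fintype α] [DecidableEq α] (m : ℕ) (hm : 1 ≤ m) :
    (Nat.card {σ : Equiv.Perm α // ∀ c ∈ σ.cycleType, c ≤ m} : ℝ) =
      (Nat.factorial (Fintype.card α) : ℝ) * QQ m (Fintype.card α) := by
  rw [Nat.card_eq_fintype_card, Fintype.card_subtype]
  rw [Finset.card_eq_sum_card_fiberwise (f := fun σ : Equiv.Perm α => σ.partition)
    (t := (Finset.univ : Finset (Fintype.card α).Partition).filter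
      (fun l => ∀ i ∈ l.parts, i ≤ m))]
  · rw [QQ, Finset.mul_sum]
    push_cast
    apply Finset.sum_congr rfl
    intro l hl
    rw [← fiber_eq]
    congr 2
    ext σ
    simp only [Finset.mem_filter, Finset.mem_univ, true_and, and_iff_right_iff_imp] at hl ⊢
    rintro rfl c hc
    apply hl
    rw [Equiv.Perm.parts_partition]
    exact Multiset.mem_add.2 (Or.inl hc)
  · intro σ hσ
    simp only [Finset.coe_filter, Finset.mem_univ, true_and, Set.mem_ofPred_eq] at hσ ⊢
    intro i hi
    rw [Equiv.Perm.parts_partition, Multiset.mem_add] at hi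
    rcases hi with hi | hi
    · exact hσ i hi
    · rw [Multiset.eq_of_mem_replicate hi]; exact hm

lemma permProb_eq (n m : ℕ) (hm : 1 ≤ m) : permProb n m = QQ m n := by
  have h := QQ_perm (α := Fin n) m hm
  rw [Fintype.card_fin] at h
  rw [permProb, h]
  field_simp

lemma QQ_part (m n i : ℕ) (hi : 1 ≤ i) (him : i ≤ m) (hin : i ≤ n) :
    ∑ l ∈ (Finset.univ : Finset n.Partition).filter (fun l => ∀ i ∈ l.parts, i ≤ m),
      ((l.parts.count i * i : ℕ) : ℝ) / zz l.parts = QQ m (n - i) := by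
  rw [QQ]
  symm
  rw [← Finset.sum_filter_add_sum_filter_not _ (fun l : n.Partition => i ∈ l.parts)]
  have h0 : ∑ x ∈ ((Finset.univ : Finset n.Partition).filter
      (fun l => ∀ i ∈ l.parts, i ≤ m)).filter (fun l : n.Partition => ¬ i ∈ l.parts),
      ((x.parts.count i * i : ℕ) : ℝ) / zz x.parts = 0 := by
    apply Finset.sum_eq_zero
    intro x hx
    rw [Finset.mem_filter] at hx
    simp [Multiset.count_eq_zero_of_notMem hx.2]
  rw [h0, add_zero]
  refine Finset.sum_bij (fun l _ => (⟨i ::ₘ l.parts, ?_, ?_⟩ : n.Partition)) ?_ ?_ ?_ ?_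
  · intro j hj
    rcases Multiset.mem_cons.1 hj with rfl | hj
    · exact hi
    · exact l.parts_pos hj
  · rw [Multiset.sum_cons, l.parts_sum]; omega
  · intro l hl
    simp only [Finset.mem_filter, Finset.mem_univ, true_and] at hl ⊢
    simp only [Multiset.mem_cons, forall_eq_or_imp, true_or, and_true]
    exact ⟨him, hl⟩
  · intro a _ b _ hab
    apply Nat.Partition.ext
    simpa using hab
  · intro b hb
    simp only [Finset.mem_filter, Finset.mem_univ, true_and] at hb
    have hc : i ::ₘ (b.parts.erase i) = b.parts := Multiset.cons_erase hb.2
    refine ⟨⟨b.parts.erase i, ?_, ?_⟩, ?_, ?_⟩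
    · intro j hj
      exact b.parts_pos (Multiset.mem_of_mem_erase hj)
    · have := b.parts_sum
      rw [← hc, Multiset.sum_cons] at this
      omega
    · simp only [Finset.mem_filter, Finset.mem_univ, true_and]
      intro j hj
      exact hb.1 j (Multiset.mem_of_mem_erase hj)
    · apply Nat.Partition.ext
      exact hc
  · intro l hl
    have hzp := zz_pos l.parts (fun i hi => l.parts_pos hi)
    have hi' : (0 : ℝ) < i := by exact_mod_cast hi
    simp only [zz_cons, Multiset.count_cons_self]
    push_cast
    field_simp

lemma QQ_rec (m n : ℕ) (hmn : m ≤ n) :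
    (n : ℝ) * QQ m n = ∑ i ∈ Finset.Icc 1 m, QQ m (n - i) := by
  have : ∀ i ∈ Finset.Icc 1 m, QQ m (n - i) =
      ∑ l ∈ (Finset.univ : Finset n.Partition).filter (fun l => ∀ i ∈ l.parts, i ≤ m),
      ((l.parts.count i * i : ℕ) : ℝ) / zz l.parts := by
    intro i hi
    rw [Finset.mem_Icc] at hi
    rw [QQ_part m n i hi.1 hi.2 (hi.2.trans hmn)]
  rw [Finset.sum_congr rfl this, Finset.sum_comm, QQ, Finset.mul_sum]
  apply Finset.sum_congr rfl
  intro l hl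
  rw [← Finset.sum_div, mul_one_div]
  congr 1
  norm_cast
  simp only [Finset.mem_filter, Finset.mem_univ, true_and] at hl
  conv_lhs => rw [← l.parts_sum, Finset.sum_multiset_count]
  simp only [smul_eq_mul]
  apply Finset.sum_subset
  · intro x hx
    rw [Multiset.mem_toFinset] at hx
    exact Finset.mem_Icc.2 ⟨l.parts_pos hx, hl x hx⟩
  · intro x _ hx
    rw [Multiset.mem_toFinset] at hx
    simp [Multiset.count_eq_zero_of_notMem hx]

lemma permProb_rec (m n : ℕ) (hm : 1 ≤ m) (hmn : m ≤ n) :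
    (n : ℝ) * permProb n m = ∑ i ∈ Finset.Icc 1 m, permProb (n - i) m := by
  simp only [permProb_eq _ _ hm]
  exact QQ_rec m n hmn

lemma permProb_nonneg (m n : ℕ) : 0 ≤ permProb n m := by
  unfold permProb; positivity

lemma permProb_le_one (m n : ℕ) : permProb n m ≤ 1 := by
  unfold permProb
  rw [div_le_one (by positivity)]
  norm_cast
  calc _ ≤ Nat.card (Equiv.Perm (Fin n)) := Finite.card_subtype_le _
    _ = _ := by rw [Nat.card_eq_fintype_card, Fintype.card_perm, Fintype.card_fin]

lemma permProb_eq_one (m n : ℕ) (h : n ≤ m) : permProb n m = 1 := by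
  unfold permProb
  rw [div_eq_one_iff_eq (by positivity)]
  norm_cast
  have : ∀ σ : Equiv.Perm (Fin n), ∀ c ∈ σ.cycleType, c ≤ m := by
    intro σ c hc
    have h1 := Equiv.Perm.le_card_support_of_mem_cycleType hc
    have h2 := σ.support.card_le_univ
    rw [Fintype.card_fin] at h2
    omega
  rw [Nat.card_eq_fintype_card, Fintype.card_subtype]
  rw [Finset.filter_true_of_mem (fun σ _ => this σ), Finset.card_univ, Fintype.card_perm,
    Fintype.card_fin]

end PermRec

noncomputable def Psi (a x : ℝ) : ℝ := x * (Real.log (a * x) - 1)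

lemma Psi_lower {a x y : ℝ} (ha : 0 < a) (hx : 0 < x) (hy : 0 < y) :
    Real.log (a * x) * (y - x) ≤ Psi a y - Psi a x := by
  unfold Psi
  rw [Real.log_mul ha.ne' hx.ne', Real.log_mul ha.ne' hy.ne']
  have h := Real.log_le_sub_one_of_pos (div_pos hx hy)
  rw [Real.log_div hx.ne' hy.ne'] at h
  have h2 : y * (Real.log x - Real.log y) ≤ y * (x / y - 1) := mul_le_mul_of_nonneg_left h hy.le
  have h3 : y * (x / y - 1) = x - y := by field_simp
  nlinarith

lemma Psi_upper {a x y : ℝ} (ha : 0 < a) (hx : 0 < x) (hy : 0 < y) :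
    Psi a y - Psi a x ≤ Real.log (a * y) * (y - x) := by
  have := Psi_lower ha hy hx
  linarith

lemma geom_Icc (X : ℝ) (m : ℕ) :
    (X - 1) * ∑ i ∈ Finset.Icc 1 m, X ^ i = X * (X ^ m - 1) := by
  induction m with
  | zero => simp
  | succ m ih =>
    rw [Finset.sum_Icc_succ_top (by omega), mul_add, ih]
    ring

lemma disc_lower (m n : ℕ) (hm : 1 ≤ m) (hmn : m ≤ n) (hn : 2 ≤ n) (w : ℝ)
    (hw : w = 1 - Real.exp (-(Real.log n / m))) :
    ∀ k : ℕ, k ≤ n →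
      Real.exp (-(1 / (m : ℝ)) * (Psi w (k + (m + 1 / w)) - Psi w (m + 1 / w))) ≤
        permProb k m := by
  have hm0 : (0 : ℝ) < m := by exact_mod_cast hm
  have hn1 : (1 : ℝ) < n := by exact_mod_cast hn
  have hm1 : (1 : ℝ) ≤ m := by exact_mod_cast hm
  have hln : 0 < Real.log n := Real.log_pos hn1
  have hw0 : 0 < w := by
    rw [hw, sub_pos, Real.exp_lt_one_iff, neg_lt_zero]
    positivity
  set b : ℝ := m + 1 / w with hb
  have hb0 : 0 < b := by positivity
  have hwb : w * b = w * m + 1 := by rw [hb]; field_simp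
  have hwn : w * n + 1 ≤ n := by
    have : 1 ≤ n * Real.exp (-(Real.log n / m)) := by
      have h1 : (n : ℝ) = Real.exp (Real.log n) := (Real.exp_log (by linarith)).symm
      have h2 : Real.log n / m ≤ Real.log n := div_le_self hln.le hm1
      calc (1 : ℝ) ≤ Real.exp (Real.log n + -(Real.log n / m)) := by
            apply Real.one_le_exp; linarith
        _ = _ := by rw [Real.exp_add, ← h1]
    rw [hw]; linarith
  intro k
  induction k using Nat.strong_induction_on with
  | _ k ih =>
  intro hkn
  rcases le_or_gt k m with hkm | hkm
  · rw [permProb_eq_one m k hkm]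
    rw [Real.exp_le_one_iff]
    have h1 := Psi_lower hw0 hb0 (show 0 < (k : ℝ) + b by positivity)
    have h2 : 0 ≤ Real.log (w * b) * (k + b - b) := by
      apply mul_nonneg
      · apply Real.log_nonneg
        rw [hwb]
        have := mul_pos hw0 hm0
        linarith
      · simp
    have : 0 ≤ 1 / (m : ℝ) * (Psi w (k + b) - Psi w b) :=
      mul_nonneg (by positivity) (by linarith)
    linarith
  · have hk0 : (0 : ℝ) < k := by exact_mod_cast (lt_of_le_of_lt (Nat.zero_le _) hkm)
    have hkn' : (k : ℝ) ≤ n := by exact_mod_cast hkn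
    set lam : ℝ := Real.log (w * k + 1) with hlam
    have hwk : 0 < w * k := mul_pos hw0 hk0
    set X : ℝ := Real.exp (lam / m) with hX
    have hX0 : 0 < X := Real.exp_pos _
    have hlam0 : 0 < lam := Real.log_pos (by linarith)
    have hX1 : 1 < X := by
      rw [hX, Real.one_lt_exp_iff]; positivity
    have hXm : X ^ m = w * k + 1 := by
      rw [hX, ← Real.exp_nat_mul, mul_div_cancel₀ _ hm0.ne', hlam, Real.exp_log (by linarith)]
    have hXn : X - 1 ≤ X * w := by
      have h1 : lam ≤ Real.log n := by
        apply Real.log_le_log (by linarith)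
        have := mul_le_mul_of_nonneg_left hkn' hw0.le
        linarith
      have h2 : Real.exp (-(Real.log n / m)) ≤ Real.exp (-(lam / m)) := by
        apply Real.exp_le_exp.2
        have := div_le_div_of_nonneg_right h1 hm0.le
        linarith
      rw [Real.exp_neg (lam / m), ← hX] at h2
      have h3 := mul_le_mul_of_nonneg_left h2 hX0.le
      rw [mul_inv_cancel₀ hX0.ne'] at h3
      rw [hw]; linarith
    set S := ∑ i ∈ Finset.Icc 1 m, X ^ i with hS
    have hSk : (k : ℝ) ≤ S := by
      have hg := geom_Icc X m
      rw [hXm, ← hS] at hg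
      have : (X - 1) * k ≤ (X - 1) * S := by
        rw [hg]; nlinarith
      exact le_of_mul_le_mul_left this (by linarith)
    set f : ℝ → ℝ := fun x => Real.exp (-(1 / (m : ℝ)) * (Psi w (x + b) - Psi w b)) with hf
    have hrec := permProb_rec m k hm hkm.le
    have hge : ∀ i ∈ Finset.Icc 1 m, f k * X ^ i ≤ permProb (k - i) m := by
      intro i hi
      rw [Finset.mem_Icc] at hi
      have hik : i ≤ k := by omega
      have him : (i : ℝ) ≤ m := by exact_mod_cast hi.2
      refine le_trans ?_ (ih (k - i) (by omega) (by omega))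
      rw [hf, hX, ← Real.exp_nat_mul, ← Real.exp_add]
      apply Real.exp_le_exp.2
      rw [Nat.cast_sub hik]
      have hpos : (0 : ℝ) < k - i + b := by
        have : (i : ℝ) ≤ k := by exact_mod_cast hik
        linarith
      have h1 := Psi_lower hw0 hpos (show 0 < (k : ℝ) + b by positivity)
      have h2 : lam ≤ Real.log (w * (k - i + b)) := by
        apply Real.log_le_log (by linarith)
        have : w * i ≤ w * m := mul_le_mul_of_nonneg_left him hw0.le
        have e : w * (k - i + b) = w * k - w * i + w * b := by ring
        rw [e, hwb]; linarith
      have h3 : lam * i ≤ Real.log (w * (k - i + b)) * i :=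
        mul_le_mul_of_nonneg_right h2 (by positivity)
      have e : (k : ℝ) + b - (k - i + b) = i := by ring
      rw [e] at h1
      have h4 : 1 / (m : ℝ) * (lam * i) ≤
          1 / (m : ℝ) * (Psi w (k + b) - Psi w (k - i + b)) :=
        mul_le_mul_of_nonneg_left (h3.trans h1) (by positivity)
      have e2 : (i : ℝ) * (lam / m) = 1 / (m : ℝ) * (lam * i) := by ring
      rw [e2]
      linarith
    have hsum := Finset.sum_le_sum hge
    rw [← Finset.mul_sum, ← hS, ← hrec] at hsum
    have hfk : 0 < f k := Real.exp_pos _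
    have : (k : ℝ) * f k ≤ k * permProb k m := by
      refine le_trans ?_ hsum
      rw [mul_comm]
      exact mul_le_mul_of_nonneg_left hSk hfk.le
    exact le_of_mul_le_mul_left this hk0

lemma disc_upper (m : ℕ) (hm : 1 ≤ m) (w k0 : ℝ) (hw0 : 0 < w)
    (hk0m : m ≤ k0) (hwk0 : 1 < w * k0)
    (hw : Real.exp (-(Real.log (w * k0) / m)) ≤ 1 - w) :
    ∀ k : ℕ, 
      permProb k m ≤
      Real.exp (-(1 / (m : ℝ)) * (Psi w (max k k0) - Psi w k0)) := by
  have hm0 : (0 : ℝ) < m := by exact_mod_cast hm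
  have hk00 : 0 < k0 := by linarith
  intro k
  induction k using Nat.strong_induction_on with
  | _ k ih =>
  rcases le_or_gt (k : ℝ) k0 with hkm | hkm
  · rw [max_eq_right hkm]
    simpa using permProb_le_one m k
  · have hk0 : (0 : ℝ) < k := by linarith
    have hmk : m ≤ k := by
      have : (m : ℝ) ≤ k := by linarith
      exact_mod_cast this
    set lam : ℝ := Real.log (w * k) with hlam
    have hwk : w * k0 < w * k := mul_lt_mul_of_pos_left hkm hw0
    set X : ℝ := Real.exp (lam / m) with hX
    have hX0 : 0 < X := Real.exp_pos _
    have hlam0 : 0 < lam := Real.log_pos (by linarith)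
    have hX1 : 1 < X := by
      rw [hX, Real.one_lt_exp_iff]; positivity
    have hXm : X ^ m = w * k := by
      rw [hX, ← Real.exp_nat_mul, mul_div_cancel₀ _ hm0.ne', hlam, Real.exp_log (by linarith)]
    have hXn : X * w ≤ X - 1 := by
      have h1 : Real.log (w * k0) ≤ lam := by
        apply Real.log_le_log (by linarith)
        linarith
      have h2 : Real.exp (-(lam / m)) ≤ Real.exp (-(Real.log (w * k0) / m)) := by
        apply Real.exp_le_exp.2
        have := div_le_div_of_nonneg_right h1 hm0.le
        linarith
      have h2 := h2.trans hw
      rw [Real.exp_neg (lam / m), ← hX] at h2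
      have h3 := mul_le_mul_of_nonneg_left h2 hX0.le
      rw [mul_inv_cancel₀ hX0.ne'] at h3
      linarith
    set S := ∑ i ∈ Finset.Icc 1 m, X ^ i with hS
    have hSk : S ≤ (k : ℝ) := by
      have hg := geom_Icc X m
      rw [hXm, ← hS] at hg
      have : (X - 1) * S ≤ (X - 1) * k := by
        rw [hg]; nlinarith
      exact le_of_mul_le_mul_left this (by linarith)
    set f : ℝ → ℝ := fun x => Real.exp (-(1 / (m : ℝ)) * (Psi w (max x k0) - Psi w k0)) with hf
    have hrec := permProb_rec m k hm hmk
    have hge : ∀ i ∈ Finset.Icc 1 m, permProb (k - i) m ≤ f k * X ^ i := by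
      intro i hi
      rw [Finset.mem_Icc] at hi
      have hik : i ≤ k := by omega
      refine le_trans (ih (k - i) (by omega)) ?_
      rw [hf, hX, ← Real.exp_nat_mul, ← Real.exp_add]
      apply Real.exp_le_exp.2
      rw [Nat.cast_sub hik]
      have hi0 : (0 : ℝ) ≤ i := by positivity
      have hpos : 0 < max ((k : ℝ) - i) k0 := lt_max_of_lt_right hk00
      have h1 := Psi_upper hw0 hpos hk0
      have h3 : lam * (k - max ((k : ℝ) - i) k0) ≤ lam * i := by
        apply mul_le_mul_of_nonneg_left _ hlam0.le
        have := le_max_left ((k : ℝ) - i) k0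
        linarith
      have h4 : 1 / (m : ℝ) * (Psi w k - Psi w (max ((k : ℝ) - i) k0)) ≤ 1 / (m : ℝ) * (lam * i) :=
        mul_le_mul_of_nonneg_left (h1.trans h3) (by positivity)
      have e2 : (i : ℝ) * (lam / m) = 1 / (m : ℝ) * (lam * i) := by ring
      rw [e2]
      simp only [max_eq_left hkm.le]
      linarith
    have hsum := Finset.sum_le_sum hge
    rw [← Finset.mul_sum, ← hS, ← hrec] at hsum
    have hfk : 0 < f k := Real.exp_pos _
    have : (k : ℝ) * permProb k m ≤ k * f k := by
      refine le_trans hsum ?_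
      rw [mul_comm (k : ℝ)]
      exact mul_le_mul_of_nonneg_left hSk hfk.le
    exact le_of_mul_le_mul_left this hk0

lemma rho_int {ρ : ℝ → ℝ} (h : IsDickman ρ) {v : ℝ} (hv : 1 < v) :
    v * ρ v = ∫ s in (v - 1)..v, ρ s := by
  obtain ⟨hc, hpos, hone, hder⟩ := h
  set r : ℝ → ℝ := fun x => ρ (max x 0) with hr
  have hrc : Continuous r := by
    apply hc.comp_continuous (f := fun x : ℝ => max x 0) (by fun_prop)
    intro x
    exact le_max_right x 0
  have hreq : ∀ x, 0 ≤ x → r x = ρ x := fun x hx => by simp [hr, max_eq_left hx]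
  set I : ℝ → ℝ := fun x => ∫ s in (0:ℝ)..x, r s with hI
  have hId : ∀ x, HasDerivAt I (r x) x := fun x =>
    intervalIntegral.integral_hasDerivAt_right (hrc.intervalIntegrable _ _)
      (hrc.stronglyMeasurableAtFilter _ _) hrc.continuousAt
  have hIc : Continuous I := continuous_iff_continuousAt.2 (fun x => (hId x).continuousAt)
  set G : ℝ → ℝ := fun x => x * ρ x - (I x - I (x - 1)) with hG
  have hGc : ContinuousOn G (Set.Icc 1 v) := by
    apply ContinuousOn.sub
    · apply ContinuousOn.mul continuousOn_id
      apply hc.mono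
      intro x hx
      exact le_trans zero_le_one hx.1
    · exact (hIc.sub (hIc.comp (by fun_prop))).continuousOn
  have hGd : ∀ x ∈ Set.Ioo 1 v, HasDerivAt G ((fun _ => (0:ℝ)) x) x := by
    intro x hx
    have h1 := ((hasDerivAt_id x).mul (hder x hx.1)).sub
      ((hId x).sub ((hId (x - 1)).comp_sub_const x 1))
    have hx0 : 0 < x := by linarith [hx.1]
    refine h1.congr_deriv ?_
    rw [hreq x hx0.le, hreq (x - 1) (by linarith [hx.1])]
    simp only [id]
    field_simp
    ring
  obtain ⟨c, _, hceq⟩ := exists_hasDerivAt_eq_slope G _ hv hGc hGd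
  have hv1 : v - 1 ≠ 0 := by linarith
  have hGeq : G v = G 1 := by
    have := hceq
    field_simp at this
    linarith
  have hG1 : G 1 = 0 := by
    simp only [hG, hI]
    rw [hone 1 ⟨by norm_num, le_refl _⟩]
    have : ∫ s in (0:ℝ)..1, r s = ∫ s in (0:ℝ)..1, (1:ℝ) := by
      apply intervalIntegral.integral_congr
      intro s hs
      rw [Set.uIcc_of_le zero_le_one] at hs
      show r s = 1
      rw [hreq s hs.1, hone s hs]
    rw [this]
    simp
  have h2 : I v - I (v - 1) = ∫ s in (v - 1)..v, ρ s := by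
    simp only [hI]
    rw [intervalIntegral.integral_interval_sub_left (hrc.intervalIntegrable _ _)
      (hrc.intervalIntegrable _ _)]
    apply intervalIntegral.integral_congr
    intro s hs
    rw [Set.uIcc_of_le (by linarith)] at hs
    exact hreq s (by linarith [hs.1])
  have h3 : v * ρ v - (I v - I (v - 1)) = 0 := by
    have := hGeq.trans hG1
    simpa only [hG] using this
  rw [← h2]
  linarith

lemma cont_cmp {h1 h2 : ℝ → ℝ} {v0 u : ℝ} (c1 : ContinuousOn h1 (Set.Icc 0 u))
    (c2 : ContinuousOn h2 (Set.Icc 0 u))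
    (hb : ∀ v, 0 ≤ v → v ≤ v0 → h1 v < h2 v)
    (hs : ∀ v, v0 < v → v ≤ u → (∀ s, 0 ≤ s → s < v → h1 s < h2 s) → h1 v < h2 v) :
    ∀ v, 0 ≤ v → v ≤ u → h1 v < h2 v := by
  by_contra hcon
  push Not at hcon
  obtain ⟨v, hv0, hvu, hv⟩ := hcon
  set S : Set ℝ := {x ∈ Set.Icc 0 u | h2 x ≤ h1 x} with hS
  have hSc : IsCompact S := by
    apply isCompact_Icc.of_isClosed_subset _ (Set.sep_subset _ _)
    exact isClosed_Icc.isClosed_le c2 c1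
  obtain ⟨x, hx, hxm⟩ := hSc.exists_isLeast ⟨v, ⟨hv0, hvu⟩, hv⟩
  have hxv : v0 < x := by
    by_contra hle
    exact absurd (hb x hx.1.1 (not_lt.1 hle)) (not_lt.2 hx.2)
  have := hs x hxv hx.1.2 (fun s hs0 hsx => by
    by_contra hns
    exact absurd (hxm (show s ∈ S from ⟨⟨hs0, hsx.le.trans hx.1.2⟩, not_lt.1 hns⟩)) (not_le.2 hsx))
  exact absurd this (not_lt.2 hx.2)

lemma exp_int {lam : ℝ} (hl : 0 < lam) (v : ℝ) :
    ∫ s in (v - 1)..v, Real.exp (lam * (v - s)) = (Real.exp lam - 1) / lam := by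
  have hd : ∀ x ∈ Set.uIcc (v - 1) v, HasDerivAt (fun s => -(Real.exp (lam * (v - s)) / lam))
      (Real.exp (lam * (v - x))) x := by
    intro x _
    have h1 : HasDerivAt (fun s => lam * (v - s)) (lam * (-1)) x := by
      apply HasDerivAt.const_mul
      simpa using (hasDerivAt_id x).const_sub v
    refine ((h1.exp.div_const lam).neg).congr_deriv ?_
    field_simp
  rw [intervalIntegral.integral_eq_sub_of_hasDerivAt hd
    (Continuous.intervalIntegrable (by fun_prop) _ _)]
  simp
  ring

lemma rho_lower {ρ : ℝ → ℝ} (h : IsDickman ρ) (u a : ℝ) (hu : 0 ≤ u) (ha : 1 ≤ a)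
    (hau : a * (u + 2) ≤ Real.exp a) :
    Real.exp (-Psi a (u + 3)) < ρ u := by
  have ha0 : 0 < a := by linarith
  have hcont : ContinuousOn (fun v => Real.exp (-Psi a (v + 3))) (Set.Ici 0) := by
    intro x hx
    have hx' : (0 : ℝ) ≤ x := hx
    apply ContinuousAt.continuousWithinAt
    unfold Psi
    have : a * (x + 3) ≠ 0 := by positivity
    fun_prop (disch := assumption)
  have hPsi : ∀ v, 0 ≤ v → 0 < Psi a (v + 3) := by
    intro v hv
    unfold Psi
    apply mul_pos (by linarith)
    rw [sub_pos, Real.lt_log_iff_exp_lt (by positivity)]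
    have := Real.exp_one_lt_d9
    nlinarith
  refine cont_cmp (h1 := fun v => Real.exp (-Psi a (v + 3))) (h2 := ρ) (v0 := 1) (u := u)
    (hcont.mono Set.Icc_subset_Ici_self) (h.1.mono Set.Icc_subset_Ici_self) ?_ ?_ u hu le_rfl
  · intro v hv0 hv1
    rw [h.2.2.1 v ⟨hv0, hv1⟩, Real.exp_lt_one_iff]
    linarith [hPsi v hv0]
  · intro v hv1 hvu ih
    have hv0 : 0 < v := by linarith
    set f : ℝ → ℝ := fun v => Real.exp (-Psi a (v + 3)) with hf
    set lam := Real.log (a * (v + 2)) with hlam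
    have hlam0 : 0 < lam := Real.log_pos (by nlinarith)
    have hlama : lam ≤ a := by
      rw [hlam, Real.log_le_iff_le_exp (by positivity)]
      refine le_trans ?_ hau
      apply mul_le_mul_of_nonneg_left (by linarith) ha0.le
    have hsub : Set.uIcc (v - 1) v ⊆ Set.Ici 0 := by
      rw [Set.uIcc_of_le (by linarith)]
      intro x hx
      exact le_trans (by linarith) hx.1
    have i1 : ∫ s in (v - 1)..v, f v * Real.exp (lam * (v - s)) ≤ ∫ s in (v - 1)..v, ρ s := by
      apply intervalIntegral.integral_mono_on_of_le_Ioo (by linarith)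
        (Continuous.intervalIntegrable (by fun_prop) _ _)
        (h.1.mono hsub).intervalIntegrable
      intro s hs
      have hs0 : 0 ≤ s := by linarith [hs.1]
      refine le_trans ?_ (ih s hs0 hs.2).le
      rw [hf, ← Real.exp_add]
      apply Real.exp_le_exp.2
      have h1 := Psi_lower ha0 (show 0 < s + 3 by linarith) (show 0 < v + 3 by linarith)
      have h2 : lam ≤ Real.log (a * (s + 3)) := by
        apply Real.log_le_log (by positivity)
        apply mul_le_mul_of_nonneg_left _ ha0.le
        linarith [hs.1]
      have h3 : lam * (v - s) ≤ Real.log (a * (s + 3)) * (v - s) :=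
        mul_le_mul_of_nonneg_right h2 (by linarith [hs.2])
      have e : v + 3 - (s + 3) = v - s := by ring
      rw [e] at h1
      linarith
    rw [intervalIntegral.integral_const_mul, exp_int hlam0, ← rho_int h hv1] at i1
    have hfv : 0 < f v := Real.exp_pos _
    have i2 : v < (Real.exp lam - 1) / lam := by
      rw [lt_div_iff₀ hlam0, hlam, Real.exp_log (by positivity), ← hlam]
      nlinarith
    have i3 : v * f v < v * ρ v := by
      refine lt_of_lt_of_le ?_ i1
      rw [mul_comm]
      exact mul_lt_mul_of_pos_left i2 hfv
    exact lt_of_mul_lt_mul_left i3 hv0.le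

lemma rho_lt_two {ρ : ℝ → ℝ} (h : IsDickman ρ) (u : ℝ) (hu : 0 ≤ u) : ρ u < 2 := by
  refine cont_cmp (h1 := ρ) (h2 := fun _ => 2) (v0 := 1) (u := u)
    (h.1.mono Set.Icc_subset_Ici_self) continuousOn_const ?_ ?_ u hu le_rfl
  · intro v hv0 hv1
    rw [h.2.2.1 v ⟨hv0, hv1⟩]; norm_num
  · intro v hv1 hvu ih
    have hsub : Set.uIcc (v - 1) v ⊆ Set.Ici 0 := by
      rw [Set.uIcc_of_le (by linarith)]
      intro x hx
      exact le_trans (by linarith) hx.1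
    have i1 : ∫ s in (v - 1)..v, ρ s ≤ ∫ s in (v - 1)..v, (2 : ℝ) := by
      apply intervalIntegral.integral_mono_on_of_le_Ioo (by linarith)
        (h.1.mono hsub).intervalIntegrable
        (Continuous.intervalIntegrable (by fun_prop) _ _)
      intro s hs
      exact (ih s (by linarith [hs.1]) hs.2).le
    rw [← rho_int h hv1] at i1
    simp at i1
    nlinarith [h.2.1 v (by linarith)]

lemma rho_upper {ρ : ℝ → ℝ} (h : IsDickman ρ) (u a v0 : ℝ) (hu : v0 ≤ u) (ha : 1 ≤ a)
    (hv0 : 1 ≤ v0) (hav : Real.exp a ≤ a * v0) :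
    ρ u < 2 * Real.exp (-(Psi a u - Psi a v0)) := by
  have ha0 : 0 < a := by linarith
  have hv00 : 0 < v0 := by linarith
  set f : ℝ → ℝ := fun v => 2 * Real.exp (-(Psi a (max v v0) - Psi a v0)) with hf
  have hcont : Continuous f := by
    rw [continuous_iff_continuousAt]
    intro x
    rw [hf]
    unfold Psi
    have h1 : 0 < max x v0 := lt_max_of_lt_right hv00
    have : a * max x v0 ≠ 0 := by positivity
    fun_prop (disch := assumption)
  have key : ∀ v, 0 ≤ v → v ≤ u → ρ v < f v := by
    refine cont_cmp (v0 := v0) (h.1.mono Set.Icc_subset_Ici_self) hcont.continuousOn ?_ ?_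
    · intro v hv0 hv1
      simp only [hf, max_eq_right hv1]
      simpa using rho_lt_two h v hv0
    · intro v hv1 hvu ih
      have hv0 : 0 < v := by linarith
      set lam := Real.log (a * v) with hlam
      have hlama : a ≤ lam := by
        rw [hlam, Real.le_log_iff_exp_le (by positivity)]
        refine le_trans hav ?_
        apply mul_le_mul_of_nonneg_left (by linarith) ha0.le
      have hlam0 : 0 < lam := by linarith
      have hsub : Set.uIcc (v - 1) v ⊆ Set.Ici 0 := by
        rw [Set.uIcc_of_le (by linarith)]
        intro x hx
        exact le_trans (by linarith) hx.1
      have i1 : ∫ s in (v - 1)..v, ρ s ≤ ∫ s in (v - 1)..v, f v * Real.exp (lam * (v - s)) := by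
        apply intervalIntegral.integral_mono_on_of_le_Ioo (by linarith)
          (h.1.mono hsub).intervalIntegrable
          (Continuous.intervalIntegrable (by fun_prop) _ _)
        intro s hs
        have hs0 : 0 ≤ s := by linarith [hs.1]
        refine le_trans (ih s hs0 hs.2).le ?_
        rw [hf, mul_assoc, ← Real.exp_add]
        apply mul_le_mul_of_nonneg_left _ zero_le_two
        apply Real.exp_le_exp.2
        simp only [max_eq_left hv1.le]
        have hpos : 0 < max s v0 := lt_max_of_lt_right hv00
        have h1 := Psi_upper ha0 hpos hv0
        have h3 : lam * (v - max s v0) ≤ lam * (v - s) := by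
          apply mul_le_mul_of_nonneg_left _ hlam0.le
          have := le_max_left s v0
          linarith
        linarith
      rw [intervalIntegral.integral_const_mul, exp_int hlam0, ← rho_int h (by linarith)] at i1
      have hfv : 0 < f v := by positivity
      have i2 : (Real.exp lam - 1) / lam < v := by
        rw [div_lt_iff₀ hlam0, hlam, Real.exp_log (by positivity), ← hlam]
        nlinarith
      have i3 : v * ρ v < v * f v := by
        refine lt_of_le_of_lt i1 ?_
        rw [mul_comm v]
        exact mul_lt_mul_of_pos_left i2 hfv
      exact lt_of_mul_lt_mul_left i3 hv0.le
  have := key u (by linarith) le_rfl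
  simpa only [hf, max_eq_left hu] using this

lemma ev_log (K : ℝ) : ∀ᶠ x : ℝ in Filter.atTop, K ≤ Real.log x :=
  Real.tendsto_log_atTop.eventually_ge_atTop K

lemma ev_pow (k : ℕ) : ∀ᶠ x : ℝ in Filter.atTop, Real.log x ^ k ≤ x := by
  have h := (isLittleO_pow_log_id_atTop (n := k)).bound (zero_lt_one)
  filter_upwards [h, Filter.eventually_ge_atTop 0] with x hx hx0
  simp only [id, one_mul, Real.norm_eq_abs, abs_of_nonneg hx0] at hx
  exact (le_abs_self _).trans hx

lemma ev_loglog0 (δ : ℝ) (hδ : 0 < δ) : ∀ᶠ x : ℝ in Filter.atTop, Real.log x ≤ δ * x := by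
  have h := Real.isLittleO_log_id_atTop.bound hδ
  filter_upwards [h, Filter.eventually_ge_atTop 0] with x hx hx0
  simp only [id, Real.norm_eq_abs, abs_of_nonneg hx0] at hx
  exact (le_abs_self _).trans hx

lemma ev_loglog (δ : ℝ) (hδ : 0 < δ) :
    ∀ᶠ x : ℝ in Filter.atTop, Real.log (Real.log x) ≤ δ * Real.log x :=
  Real.tendsto_log_atTop.eventually (ev_loglog0 δ hδ)

lemma ev_rho_lower (ε : ℝ) (hε : 0 < ε) : ∀ᶠ u : ℝ in Filter.atTop, ∀ ρ : ℝ → ℝ, IsDickman ρ →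
    -(Real.log u + Real.log (Real.log u) - 1) - ε ≤ (1 / u) * Real.log (ρ u) := by
  filter_upwards [ev_log 4, ev_log (27 / ε), ev_pow 2, ev_loglog (1 / 2) (by norm_num),
    ev_loglog (ε / 6) (by positivity), Filter.eventually_ge_atTop 2] with u h4 hK hp hl hle hu2
  intro ρ h
  have hu0 : 0 < u := by linarith
  set L := Real.log u with hL
  have hL0 : 0 < L := by linarith
  set l := Real.log L with hl'
  have hl0 : 0 < l := Real.log_pos (by linarith)
  set a := L + 2 * l with ha
  have hexp : Real.exp a = u * L ^ 2 := by
    have : a = Real.log u + (2 : ℕ) * Real.log L := by rw [ha]; push_cast; ring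
    rw [this, Real.exp_add, Real.exp_nat_mul, Real.exp_log hu0, Real.exp_log hL0]
  have hlow := rho_lower h u a hu0.le (by linarith) (by
    rw [hexp]
    have h1 : a ≤ 2 * L := by linarith
    have h2 : a * (u + 2) ≤ 2 * L * (2 * u) :=
      mul_le_mul h1 (by linarith) (by linarith) (by linarith)
    have h3 : 0 ≤ u * L * (L - 4) := mul_nonneg (by positivity) (by linarith)
    nlinarith)
  have hlog : -Psi a (u + 3) ≤ Real.log (ρ u) := by
    rw [Real.le_log_iff_exp_le (h.2.1 u hu0.le)]
    exact hlow.le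
  have hloga : Real.log a ≤ l + 2 * l / L := by
    have e : a = L * (1 + 2 * l / L) := by rw [ha]; field_simp
    have hp : 0 < 2 * l / L := by positivity
    rw [e, Real.log_mul hL0.ne' (by linarith)]
    have := Real.log_le_sub_one_of_pos (show 0 < 1 + 2 * l / L by linarith)
    linarith
  have hlogu : Real.log (u + 3) ≤ L + 3 / u := by
    have e : u + 3 = u * (1 + 3 / u) := by field_simp
    have hp : 0 < 3 / u := by positivity
    rw [e, Real.log_mul hu0.ne' (by linarith)]
    have := Real.log_le_sub_one_of_pos (show 0 < 1 + 3 / u by linarith)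
    linarith
  have hlL : 2 * l / L ≤ ε / 3 := by
    rw [div_le_iff₀ hL0]; linarith
  have hlL1 : 2 * l / L ≤ 1 := by
    rw [div_le_iff₀ hL0]; linarith
  have huL : 3 / u ≤ 3 / L ^ 2 := div_le_div_of_nonneg_left (by norm_num) (by positivity) hp
  have hu3 : 0 < 3 / u := by positivity
  have huL1 : 3 / u * L ≤ ε / 9 := by
    have h1 : 3 / u * L ≤ 3 / L ^ 2 * L := mul_le_mul_of_nonneg_right huL hL0.le
    have h2 : 3 / L ^ 2 * L = 3 / L := by field_simp
    have h3 : 3 / L ≤ ε / 9 := by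
      rw [div_le_iff₀ hL0]
      rw [div_le_iff₀ hε] at hK
      linarith
    linarith
  have hu3' : 3 / u ≤ 2 := by
    rw [div_le_iff₀ hu0]; linarith
  have hPsi : Psi a (u + 3) ≤ u * (1 + 3 / u) * (l + 2 * l / L + (L + 3 / u) - 1) := by
    have e : u * (1 + 3 / u) = u + 3 := by field_simp
    rw [e, Psi, Real.log_mul (by linarith) (by linarith)]
    apply mul_le_mul_of_nonneg_left (by linarith) (by linarith)
  have hfin : (1 + 3 / u) * (l + 2 * l / L + (L + 3 / u) - 1) ≤ L + l - 1 + ε := by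
    have h1 : 3 / u * (l + 2 * l / L + (L + 3 / u) - 1) ≤ 3 / u * (2 * L) := by
      apply mul_le_mul_of_nonneg_left _ hu3.le
      linarith
    have h2 : 3 / u ≤ 3 / u * L := by nlinarith
    nlinarith
  rw [one_div, inv_mul_eq_div, le_div_iff₀ hu0]
  have := mul_le_mul_of_nonneg_left hfin hu0.le
  nlinarith

lemma ev_rho_upper (ε : ℝ) (hε : 0 < ε) : ∀ᶠ u : ℝ in Filter.atTop, ∀ ρ : ℝ → ℝ, IsDickman ρ →
    (1 / u) * Real.log (ρ u) ≤ -(Real.log u + Real.log (Real.log u) - 1) + ε := by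
  filter_upwards [ev_log 4, ev_log (3 / ε), ev_pow 2, ev_loglog (1 / 4) (by norm_num),
    ev_loglog (ε / 12) (by positivity), Filter.eventually_ge_atTop 2] with u h4 hK hp hl hle hu2
  intro ρ h
  have hu0 : 0 < u := by linarith
  set L := Real.log u with hL
  have hL0 : 0 < L := by linarith
  set l := Real.log L with hl'
  have hl0 : 0 < l := Real.log_pos (by linarith)
  set a := L - 2 * l with ha
  have ha2 : L / 2 ≤ a := by linarith
  have ha0 : 0 < a := by linarith
  have hexp : Real.exp a = u / L ^ 2 := by
    have : a = Real.log u - (2 : ℕ) * Real.log L := by rw [ha]; push_cast; ring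
    rw [this, Real.exp_sub, Real.exp_nat_mul, Real.exp_log hu0, Real.exp_log hL0]
  have hv0 : 0 < u / L ^ 2 := by positivity
  have hup := rho_upper h u a (u / L ^ 2) (div_le_self hu0.le (by nlinarith)) (by linarith)
    (by rw [le_div_iff₀ (by positivity)]; linarith) (by
      rw [hexp]
      nlinarith)
  have hlog : Real.log (ρ u) ≤ Real.log 2 - (Psi a u - Psi a (u / L ^ 2)) := by
    have := Real.log_le_log (h.2.1 u hu0.le) hup.le
    rw [Real.log_mul (by norm_num) (Real.exp_pos _).ne', Real.log_exp] at this
    linarith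
  have hloga : l - 4 * l / L ≤ Real.log a := by
    have h1 := Real.log_le_sub_one_of_pos (div_pos hL0 ha0)
    rw [Real.log_div hL0.ne' ha0.ne'] at h1
    have h2 : L / a - 1 = 2 * l / a := by
      rw [eq_div_iff ha0.ne', sub_mul, div_mul_cancel₀ _ ha0.ne', ha]; ring
    have h3 : 2 * l / a ≤ 2 * l / (L / 2) :=
      div_le_div_of_nonneg_left (by linarith) (by linarith) ha2
    have h4 : 2 * l / (L / 2) = 4 * l / L := by field_simp; ring
    linarith
  have hlL : 4 * l / L ≤ ε / 3 := by
    rw [div_le_iff₀ hL0]; linarith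
  have hLi : 1 / L ≤ ε / 3 := by
    rw [div_le_iff₀ hL0]
    rw [div_le_iff₀ hε] at hK
    linarith
  have hP1 : Psi a (u / L ^ 2) ≤ u * (1 / L) := by
    have e1 : u * (1 / L) = u / L ^ 2 * L := by field_simp
    rw [Psi, e1]
    apply mul_le_mul_of_nonneg_left _ hv0.le
    have : Real.log (a * (u / L ^ 2)) ≤ L := by
      apply Real.log_le_log (by positivity)
      rw [mul_div_assoc', div_le_iff₀ (by positivity)]
      have : a ≤ L ^ 2 := by nlinarith
      nlinarith
    linarith
  have hP2 : u * (l - 4 * l / L + L - 1) ≤ Psi a u := by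
    rw [Psi, Real.log_mul ha0.ne' hu0.ne']
    apply mul_le_mul_of_nonneg_left _ hu0.le
    linarith
  have h2 : Real.log 2 ≤ u * (1 / L) := by
    have := Real.log_two_lt_d9
    have h3 : 1 ≤ u * (1 / L) := by
      rw [mul_one_div, le_div_iff₀ hL0]
      nlinarith
    linarith
  have hfin : 2 * (1 / L) + 4 * l / L ≤ ε := by linarith
  rw [one_div, inv_mul_eq_div, div_le_iff₀ hu0]
  have := mul_le_mul_of_nonneg_left hfin hu0.le
  nlinarith

lemma permProb_pos (m n : ℕ) (hm : 1 ≤ m) (hmn : m ≤ n) (hn : 2 ≤ n) : 0 < permProb n m :=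
  lt_of_lt_of_le (Real.exp_pos _) (disc_lower m n hm hmn hn _ rfl n le_rfl)

set_option maxHeartbeats 1600000 in
lemma ev_perm_lower (A ε : ℝ) (hA : 0 < A) (hε : 0 < ε) : ∀ᶠ x : ℝ in Filter.atTop,
    ∀ n m : ℕ, (n : ℝ) = x → 1 ≤ m → m ≤ n → (m : ℝ) ≤ A * Real.log n →
    -(Real.log n - 1 + Real.log (1 - Real.exp (-(Real.log n / m)))) - ε ≤
      (m / n : ℝ) * Real.log (permProb n m) := by
  set c : ℝ := 1 - Real.exp (-(1 / A)) with hc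
  have hc0 : 0 < c := by
    rw [hc, sub_pos, Real.exp_lt_one_iff, neg_lt_zero]; positivity
  set D : ℝ := A + 1 / c with hD
  have hD0 : 0 < D := by positivity
  filter_upwards [ev_log 1, ev_log D, ev_log (3 * D / ε), ev_pow 3,
    Filter.eventually_ge_atTop 2] with x h1 hLD hLe hp hx2
  intro n m hnx hm hmn hmA
  rw [← hnx] at h1 hLD hLe hp hx2
  have hn2 : 2 ≤ n := by exact_mod_cast hx2
  have hn0 : (0 : ℝ) < n := by linarith
  have hm0 : (0 : ℝ) < m := by exact_mod_cast hm
  set L := Real.log n with hL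
  have hL0 : 0 < L := by linarith
  set w : ℝ := 1 - Real.exp (-(L / m)) with hw
  have hcw : c ≤ w := by
    have : 1 / A ≤ L / m := by
      rw [div_le_div_iff₀ hA hm0]; linarith
    have := Real.exp_le_exp.2 (neg_le_neg this)
    rw [hc, hw]; linarith
  have hw0 : 0 < w := by linarith
  have hw1 : w < 1 := by
    have := Real.exp_pos (-(L / m))
    rw [hw]; linarith
  have hlow := disc_lower m n hm hmn hn2 w hw n le_rfl
  have hP := permProb_pos m n hm hmn hn2
  rw [← Real.le_log_iff_exp_le hP] at hlow
  set b : ℝ := m + 1 / w with hb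
  have hb0 : 0 < b := by positivity
  have hwb : w * b = w * m + 1 := by rw [hb]; field_simp
  have hbD : b ≤ D * L := by
    have h2 : 1 / w ≤ 1 / c := one_div_le_one_div_of_le hc0 hcw
    have h3 : 0 < 1 / c := by positivity
    rw [hb, hD]
    nlinarith
  set β := b / n with hβ
  have hβ0 : 0 < β := by positivity
  have hbn : b = β * n := by rw [hβ]; field_simp
  have hβL : β * L ^ 2 ≤ D := by
    rw [hβ, div_mul_eq_mul_div, div_le_iff₀ hn0]
    have h2 : b * L ^ 2 ≤ D * L * L ^ 2 := mul_le_mul_of_nonneg_right hbD (by positivity)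
    have h3 : D * L ^ 3 ≤ D * n := mul_le_mul_of_nonneg_left hp hD0.le
    nlinarith
  have hβL1 : β ≤ L := by
    have : β * 1 ≤ β * L ^ 2 := mul_le_mul_of_nonneg_left (by nlinarith) hβ0.le
    linarith
  have herr : β * (L + β + 1) ≤ ε := by
    have h2 : β * (L + β + 1) ≤ β * (3 * L) := mul_le_mul_of_nonneg_left (by linarith) hβ0.le
    rw [div_le_iff₀ hε] at hLe
    have h3 : β * (3 * L) * L ≤ ε * L := by nlinarith
    exact h2.trans (le_of_mul_le_mul_right h3 hL0)
  have hPb : -b ≤ Psi w b := by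
    unfold Psi
    have : 0 ≤ Real.log (w * b) := by
      apply Real.log_nonneg
      rw [hwb]
      have := mul_pos hw0 hm0
      linarith
    nlinarith
  have hlw : Real.log w < 0 := Real.log_neg hw0 hw1
  have hPn : Psi w (n + b) ≤ n * ((1 + β) * (Real.log w + L + β - 1)) := by
    have e : (n : ℝ) + b = n * (1 + β) := by rw [hbn]; ring
    have h2 := Real.log_le_sub_one_of_pos (show 0 < 1 + β by linarith)
    rw [Psi, e, Real.log_mul hw0.ne' (by positivity), Real.log_mul hn0.ne' (by positivity),
      mul_assoc]
    apply mul_le_mul_of_nonneg_left _ hn0.le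
    apply mul_le_mul_of_nonneg_left _ (by linarith)
    linarith
  have hmul := mul_le_mul_of_nonneg_left hlow (show (0 : ℝ) ≤ m / n by positivity)
  refine le_trans ?_ hmul
  have e : (m / n : ℝ) * (-(1 / (m : ℝ)) * (Psi w (n + b) - Psi w b)) =
      (Psi w b - Psi w (n + b)) / n := by field_simp; ring
  rw [e, le_div_iff₀ hn0]
  have hfin : (1 + β) * (Real.log w + L + β - 1) + β ≤ L - 1 + Real.log w + ε := by
    have : β * Real.log w ≤ 0 := mul_nonpos_of_nonneg_of_nonpos hβ0.le hlw.le
    linarith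
  have := mul_le_mul_of_nonneg_left hfin hn0.le
  linarith

set_option maxHeartbeats 1600000 in
lemma ev_perm_upper (A ε : ℝ) (hA : 0 < A) (hε : 0 < ε) : ∀ᶠ x : ℝ in Filter.atTop,
    ∀ n m : ℕ, (n : ℝ) = x → 1 ≤ m → m ≤ n → (m : ℝ) ≤ A * Real.log n →
    (m / n : ℝ) * Real.log (permProb n m) ≤
    -(Real.log n - 1 + Real.log (1 - Real.exp (-(Real.log n / m)))) + ε := by
  set c : ℝ := 1 - Real.exp (-(1 / (2 * A))) with hc
  have hc0 : 0 < c := by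
    rw [hc, sub_pos, Real.exp_lt_one_iff, neg_lt_zero]; positivity
  filter_upwards [ev_log 2, ev_log A, ev_log (1 / c), ev_log (2 / ε), ev_pow 4,
    ev_loglog (1 / 6) (by norm_num), ev_loglog (c * ε / 12) (by positivity),
    Filter.eventually_ge_atTop 2] with x h1 hLA hLc hLe hp hl6 hle hx2
  intro n m hnx hm hmn hmA
  rw [← hnx] at h1 hLA hLc hLe hp hx2 hl6 hle
  have hn2 : 2 ≤ n := by exact_mod_cast hx2
  have hn0 : (0 : ℝ) < n := by linarith
  have hm0 : (0 : ℝ) < m := by exact_mod_cast hm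
  set L := Real.log n with hL
  have hL0 : 0 < L := by linarith
  set l := Real.log L with hl'
  have hl0 : 0 < l := Real.log_pos (by linarith)
  set M := L - 3 * l with hM
  have hM2 : L / 2 ≤ M := by linarith
  have hM0 : 0 < M := by linarith
  have hexpM : Real.exp M = n / L ^ 3 := by
    have : M = Real.log n - (3 : ℕ) * Real.log L := by rw [hM]; push_cast; ring
    rw [this, Real.exp_sub, Real.exp_nat_mul, Real.exp_log hn0, Real.exp_log hL0]
  set w : ℝ := 1 - Real.exp (-(L / m)) with hw
  set w' : ℝ := 1 - Real.exp (-(M / m)) with hw'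
  have hcw : c ≤ w' := by
    have : 1 / (2 * A) ≤ M / m := by
      rw [div_le_div_iff₀ (by positivity) hm0]; linarith [mul_le_mul_of_nonneg_left hM2 hA.le]
    have := Real.exp_le_exp.2 (neg_le_neg this)
    rw [hc, hw']; linarith
  have hw'0 : 0 < w' := by linarith
  have hw'1 : w' < 1 := by
    have := Real.exp_pos (-(M / m))
    rw [hw']; linarith
  have hww' : w' ≤ w := by
    rw [hw, hw']
    have : M / m ≤ L / m := div_le_div_of_nonneg_right (by linarith) hm0.le
    have := Real.exp_le_exp.2 (neg_le_neg this)
    linarith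
  have hw0 : 0 < w := by linarith
  have hk0 : 0 < (n : ℝ) / L ^ 2 := by positivity
  have hwk : (n : ℝ) / L ^ 3 ≤ w' * (n / L ^ 2) := by
    have h2 : 1 / L ≤ w' := by
      refine le_trans ?_ hcw
      rw [div_le_iff₀ hL0]
      rw [div_le_iff₀ hc0] at hLc
      linarith
    have h3 : (n : ℝ) / L ^ 3 = 1 / L * (n / L ^ 2) := by field_simp
    rw [h3]
    exact mul_le_mul_of_nonneg_right h2 hk0.le
  have hn3 : 1 < (n : ℝ) / L ^ 3 := by
    rw [← hexpM, Real.one_lt_exp_iff]; exact hM0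
  have hup := disc_upper m hm w' (n / L ^ 2) hw'0 (by
      rw [le_div_iff₀ (by positivity)]
      have h2 : (m : ℝ) * L ^ 2 ≤ L * L * L ^ 2 := by
        apply mul_le_mul_of_nonneg_right _ (by positivity)
        exact hmA.trans (mul_le_mul_of_nonneg_right hLA hL0.le)
      linarith) (by linarith) (by
      have h2 : M ≤ Real.log (w' * (n / L ^ 2)) := by
        rw [Real.le_log_iff_exp_le (by positivity), hexpM]
        exact hwk
      have h3 := div_le_div_of_nonneg_right h2 hm0.le
      have h4 := Real.exp_le_exp.2 (neg_le_neg h3)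
      rw [hw']; linarith) n
  have hP := permProb_pos m n hm hmn hn2
  have hlog := Real.log_le_log hP hup
  rw [Real.log_exp, max_eq_left (div_le_self hn0.le (one_le_pow₀ (by linarith)))] at hlog
  have hmul := mul_le_mul_of_nonneg_left hlog (show (0 : ℝ) ≤ m / n by positivity)
  refine le_trans hmul ?_
  have e : (m / n : ℝ) * (-(1 / (m : ℝ)) * (Psi w' n - Psi w' (n / L ^ 2))) =
      (Psi w' (n / L ^ 2) - Psi w' n) / n := by field_simp; ring
  rw [e, div_le_iff₀ hn0]
  have hP1 : Psi w' (n / L ^ 2) ≤ n * (1 / L) := by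
    have e1 : (n : ℝ) * (1 / L) = n / L ^ 2 * L := by field_simp
    rw [Psi, e1]
    apply mul_le_mul_of_nonneg_left _ hk0.le
    have : Real.log (w' * (n / L ^ 2)) ≤ L := by
      apply Real.log_le_log (by positivity)
      have h2 : (n : ℝ) / L ^ 2 ≤ n := div_le_self hn0.le (one_le_pow₀ (by linarith))
      exact (mul_le_of_le_one_left hk0.le hw'1.le).trans h2
    linarith
  have hP2 : Psi w' n = n * (Real.log w' + L - 1) := by
    rw [Psi, Real.log_mul hw'0.ne' hn0.ne']
  have hdiff : w - w' ≤ 6 * l / L := by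
    have h2 : w - w' = Real.exp (-(M / m)) * (1 - Real.exp (-(3 * l / m))) := by
      have e2 : -(L / m) = -(M / m) + -(3 * l / m) := by rw [hM]; ring
      rw [hw, hw', e2, Real.exp_add]; ring
    have h3 : 1 - Real.exp (-(3 * l / m)) ≤ 3 * l / m := by
      have := Real.add_one_le_exp (-(3 * l / m))
      linarith
    have hMm : 0 < M / m := by positivity
    have h4 : Real.exp (-(M / m)) ≤ 1 / (M / m) := by
      rw [Real.exp_neg, inv_eq_one_div]
      apply one_div_le_one_div_of_le hMm
      have := Real.add_one_le_exp (M / m)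
      linarith
    have h5 : Real.exp (-(M / m)) * (1 - Real.exp (-(3 * l / m))) ≤ 1 / (M / m) * (3 * l / m) := by
      refine (mul_le_mul_of_nonneg_left h3 (Real.exp_pos _).le).trans ?_
      exact mul_le_mul_of_nonneg_right h4 (by positivity)
    have h6 : 1 / (M / m) * (3 * l / m) = 3 * l / M := by field_simp
    have h7 : 3 * l / M ≤ 3 * l / (L / 2) :=
      div_le_div_of_nonneg_left (by linarith) (by linarith) hM2
    have h8 : 3 * l / (L / 2) = 6 * l / L := by field_simp; ring
    linarith
  have hlogw : Real.log w - Real.log w' ≤ ε / 2 := by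
    rw [← Real.log_div hw0.ne' hw'0.ne']
    have h2 := Real.log_le_sub_one_of_pos (div_pos hw0 hw'0)
    refine h2.trans ?_
    rw [div_sub_one hw'0.ne', div_le_iff₀ hw'0]
    refine hdiff.trans ?_
    rw [div_le_iff₀ hL0]
    have : c * (ε * L) ≤ w' * (ε * L) := mul_le_mul_of_nonneg_right hcw (by positivity)
    linarith
  have hLi : 1 / L ≤ ε / 2 := by
    rw [div_le_iff₀ hL0]
    rw [div_le_iff₀ hε] at hLe
    linarith
  have hfin : 1 / L - (Real.log w' + L - 1) ≤ -(L - 1 + Real.log w) + ε := by linarith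
  have := mul_le_mul_of_nonneg_left hfin hn0.le
  linarith

lemma ev_u (A U : ℝ) (hA : 0 < A) : ∀ᶠ x : ℝ in Filter.atTop,
    ∀ n m : ℕ, (n : ℝ) = x → 1 ≤ m → (m : ℝ) ≤ A * Real.log n → U ≤ (n : ℝ) / m := by
  filter_upwards [ev_log 1, ev_log (A * |U|), ev_pow 2, Filter.eventually_ge_atTop 2]
    with x h1 hL hp hx2
  intro n m hnx hm hmA
  rw [← hnx] at h1 hL hp hx2
  have hm0 : (0 : ℝ) < m := by exact_mod_cast hm
  rw [le_div_iff₀ hm0]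
  have h2 : U * m ≤ |U| * m := mul_le_mul_of_nonneg_right (le_abs_self U) hm0.le
  have h3 : |U| * m ≤ |U| * (A * Real.log n) := mul_le_mul_of_nonneg_left hmA (abs_nonneg U)
  nlinarith

lemma ev_final (A δ : ℝ) (hA : 0 < A) (hδ : 0 < δ) : ∀ᶠ x : ℝ in Filter.atTop,
    ∀ n m : ℕ, (n : ℝ) = x → 1 ≤ m → (m : ℝ) ≤ A * Real.log n →
    |Real.log (Real.log ((n : ℝ) / m)) - Real.log (Real.log n)| ≤ δ := by
  set η : ℝ := min (1 / 4) (δ / 4) with hη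
  have hη0 : 0 < η := by positivity
  filter_upwards [ev_log 1, ev_loglog η hη0, ev_log (|Real.log A| / η),
    Filter.eventually_ge_atTop 2]
    with x h1 hl hLA hx2
  intro n m hnx hm hmA
  rw [← hnx] at h1 hl hLA hx2
  have hm0 : (0 : ℝ) < m := by exact_mod_cast hm
  have hm1 : (1 : ℝ) ≤ m := by exact_mod_cast hm
  have hn0 : (0 : ℝ) < n := by linarith
  have hη1 : η ≤ 1 / 4 := min_le_left _ _
  have hη2 : η ≤ δ / 4 := min_le_right _ _
  rw [Real.log_div hn0.ne' hm0.ne']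
  set L := Real.log n with hL
  have hL0 : 0 < L := by linarith
  have hlm0 : 0 ≤ Real.log m := Real.log_nonneg hm1
  have hlm : Real.log m ≤ 2 * η * L := by
    have h2 := Real.log_le_log hm0 hmA
    rw [Real.log_mul hA.ne' hL0.ne'] at h2
    rw [div_le_iff₀ hη0] at hLA
    have := le_abs_self (Real.log A)
    linarith
  have hu : L / 2 ≤ L - Real.log m := by nlinarith
  have hu0 : 0 < L - Real.log m := by linarith
  have hle : Real.log (L - Real.log m) ≤ Real.log L := Real.log_le_log hu0 (by linarith)
  rw [abs_sub_comm, abs_of_nonneg (by linarith), ← Real.log_div hL0.ne' hu0.ne']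
  refine (Real.log_le_sub_one_of_pos (by positivity)).trans ?_
  rw [div_sub_one hu0.ne', div_le_iff₀ hu0]
  nlinarith

theorem stmt7 :
    ∀ A : ℝ, 0 < A → ∀ ε : ℝ, 0 < ε → ∃ N : ℕ, ∀ n : ℕ, N ≤ n →
      ∀ m : ℕ, 1 ≤ m → m ≤ n → (m : ℝ) ≤ A * Real.log n →
      ∀ ρ : ℝ → ℝ, IsDickman ρ →
      ∀ u t : ℝ, u = (n : ℝ) / (m : ℝ) → t = Real.log n / (m : ℝ) →
      |(1 / u) * Real.log (permProb n m / ρ u) -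
          Real.log (t / (1 - Real.exp (-t)))| ≤ ε := by
  intro A hA ε hε
  have hε3 : 0 < ε / 3 := by positivity
  obtain ⟨U, hU⟩ := Filter.eventually_atTop.1
    ((ev_rho_lower (ε / 3) hε3).and (ev_rho_upper (ε / 3) hε3))
  have hev := (ev_perm_lower A (ε / 3) hA hε3).and ((ev_perm_upper A (ε / 3) hA hε3).and
    ((ev_u A U hA).and ((ev_final A (ε / 3) hA hε3).and (Filter.eventually_ge_atTop (2 : ℝ)))))
  have hev' := (tendsto_natCast_atTop_atTop (R := ℝ)).eventually hev
  obtain ⟨N, hN⟩ := Filter.eventually_atTop.1 hev'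
  refine ⟨N, ?_⟩
  intro n hn m hm hmn hmA ρ hρ u t hu ht
  obtain ⟨hpl, hpu, hun, hfin, hn2⟩ := hN n hn
  have hpl := hpl n m rfl hm hmn hmA
  have hpu := hpu n m rfl hm hmn hmA
  have hun := hun n m rfl hm hmA
  have hfin := hfin n m rfl hm hmA
  rw [← hu] at hun hfin
  have hrl := (hU u hun).1 ρ hρ
  have hru := (hU u hun).2 ρ hρ
  have hn0 : (0 : ℝ) < n := by linarith
  have hm0 : (0 : ℝ) < m := by exact_mod_cast hm
  have hu0 : 0 < u := by rw [hu]; positivity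
  have hL0 : 0 < Real.log n := Real.log_pos (by linarith)
  have ht0 : 0 < t := by rw [ht]; positivity
  have hP := permProb_pos m n hm hmn (by exact_mod_cast hn2)
  have hw0 : 0 < 1 - Real.exp (-t) := by
    rw [sub_pos, Real.exp_lt_one_iff]; linarith
  rw [← ht] at hpl hpu
  have e1 : (m / n : ℝ) = 1 / u := by rw [hu]; field_simp
  rw [e1] at hpl hpu
  have e2 : Real.log u = Real.log n - Real.log m := by
    rw [hu, Real.log_div hn0.ne' hm0.ne']
  have e3 : Real.log t = Real.log (Real.log n) - Real.log m := by
    rw [ht, Real.log_div hL0.ne' hm0.ne']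
  rw [Real.log_div hP.ne' (hρ.2.1 u hu0.le).ne', Real.log_div ht0.ne' hw0.ne', mul_sub]
  rw [abs_le] at hfin ⊢
  obtain ⟨hf1, hf2⟩ := hfin
  constructor <;> linarith
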